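/- Let β be a shape function of the form β(r) = ∫₀^r u dν(u) for some probability distribution ν on (0,∞). Let U, V be nonnegative real random variables with P(U ≤ u) ≤ u for all u ∈ [0,1]. Then for any constant c > 0, E[ 1{U ≤ c·β(V)} / V ] ≤ c. -/

import Mathlib

open MeasureTheory

theorem lintegral_Ioi_ofReal_rpow_neg_two {a : ℝ} (ha : 0 < a) :
    ∫⁻ v in Set.Ioi a, ENNReal.ofReal (v ^ (-2 : ℝ)) = ENNReal.ofReal a⁻¹ := by
  rw [← ofReal_integral_eq_lintegral_ofReal
    (integrableOn_Ioi_rpow_of_lt (by norm_num) ha), integral_Ioi_rpow_of_lt (by norm_num) ha]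
  · norm_num [Real.rpow_neg_one]
  · filter_upwards [ae_restrict_mem measurableSet_Ioi] with v hv
    exact Real.rpow_nonneg (ha.trans hv).le _

theorem integrableOn_id_Ioc (ν : Measure ℝ) [IsFiniteMeasure ν] (a b : ℝ) :
    IntegrableOn (fun u : ℝ => u) (Set.Ioc a b) ν :=
  (continuous_id.integrableOn_Icc (a := a) (b := b)).mono_set Set.Ioc_subset_Icc_self

theorem setIntegral_id_Ioc_mono (ν : Measure ℝ) [IsFiniteMeasure ν] :
    Monotone fun r : ℝ => ∫ u in Set.Ioc (0 : ℝ) r, u ∂ν := by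
  intro r s hrs
  refine setIntegral_mono_set (integrableOn_id_Ioc ν 0 s) ?_
    (Set.Ioc_subset_Ioc_right hrs).eventuallyLE
  filter_upwards [ae_restrict_mem measurableSet_Ioc] with u hu
  exact hu.1.le

theorem ofReal_setIntegral_id_Ioc (ν : Measure ℝ) [IsFiniteMeasure ν] (r : ℝ) :
    ENNReal.ofReal (∫ u in Set.Ioc (0 : ℝ) r, u ∂ν) =
      ∫⁻ u in Set.Ioi (0 : ℝ), (Set.Iic r).indicator ENNReal.ofReal u ∂ν := by
  rw [ofReal_integral_eq_lintegral_ofReal (integrableOn_id_Ioc ν 0 r),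
    setLIntegral_indicator measurableSet_Iic, Set.Iic_inter_Ioi]
  filter_upwards [ae_restrict_mem measurableSet_Ioc] with u hu
  exact hu.1.le

theorem lintegral_rpow_neg_two_mul_setIntegral_id_le (ν : Measure ℝ) [IsProbabilityMeasure ν] :
    ∫⁻ v in Set.Ioi (0 : ℝ), ENNReal.ofReal (v ^ (-2 : ℝ)) *
      ENNReal.ofReal (∫ u in Set.Ioc (0 : ℝ) v, u ∂ν) ≤ 1 := by
  have hmeas : Measurable fun p : ℝ × ℝ =>
      ENNReal.ofReal (p.1 ^ (-2 : ℝ)) * (Set.Iic p.1).indicator ENNReal.ofReal p.2 := by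
    refine Measurable.mul (by fun_prop) ?_
    exact Measurable.ite (measurableSet_le measurable_snd measurable_fst)
      (by fun_prop) measurable_const
  calc
    _ = ∫⁻ v in Set.Ioi (0 : ℝ), ∫⁻ u in Set.Ioi (0 : ℝ),
          ENNReal.ofReal (v ^ (-2 : ℝ)) * (Set.Iic v).indicator ENNReal.ofReal u ∂ν := by
      refine lintegral_congr fun v => ?_
      rw [ofReal_setIntegral_id_Ioc, lintegral_const_mul _
        (ENNReal.measurable_ofReal.indicator measurableSet_Iic)]
    _ = ∫⁻ u in Set.Ioi (0 : ℝ), ∫⁻ v in Set.Ioi (0 : ℝ),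
          ENNReal.ofReal (v ^ (-2 : ℝ)) * (Set.Iic v).indicator ENNReal.ofReal u ∂volume ∂ν :=
      lintegral_lintegral_swap hmeas.aemeasurable
    _ = ∫⁻ _ in Set.Ioi (0 : ℝ), 1 ∂ν := by
      refine setLIntegral_congr_fun measurableSet_Ioi fun u (hu : 0 < u) => ?_
      have hind : ∀ v : ℝ,
          ENNReal.ofReal (v ^ (-2 : ℝ)) * (Set.Iic v).indicator ENNReal.ofReal u =
            (Set.Ici u).indicator
              (fun v => ENNReal.ofReal (v ^ (-2 : ℝ)) * ENNReal.ofReal u) v := by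
        intro v
        by_cases h : u ≤ v <;> simp [Set.indicator, h]
      simp only [hind]
      rw [setLIntegral_indicator measurableSet_Ici,
        Set.inter_eq_left.mpr (Set.Ici_subset_Ioi.mpr hu),
        setLIntegral_congr Ioi_ae_eq_Ici.symm, lintegral_mul_const _ (by fun_prop),
        lintegral_Ioi_ofReal_rpow_neg_two hu, ← ENNReal.ofReal_mul (inv_nonneg.mpr hu.le),
        inv_mul_cancel₀ hu.ne', ENNReal.ofReal_one]
    _ ≤ 1 := by simpa using prob_le_one

/-- Lemma: for a shape function `β(r) = ∫₀^r u dν(u)` with `ν` a probability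
measure on `(0,∞)`, and `U` stochastically lower bounded by uniform,
`E[ 1{U ≤ c β(V)} / V ] ≤ c` for any nonnegative random variable `V`. -/
theorem stmt2 {Ω : Type*} [MeasurableSpace Ω] (μ : Measure Ω) [IsProbabilityMeasure μ]
    (ν : Measure ℝ) [IsProbabilityMeasure ν] (hν : ν (Set.Ioi (0 : ℝ))ᶜ = 0)
    (β : ℝ → ℝ) (hβ : ∀ r, β r = ∫ u in Set.Ioc (0 : ℝ) r, u ∂ν)
    (U V : Ω → ℝ) (hU : Measurable U) (hV : Measurable V)
    (hUnn : ∀ ω, 0 ≤ U ω) (hVnn : ∀ ω, 0 ≤ V ω)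
    (hunif : ∀ u ∈ Set.Icc (0 : ℝ) 1, μ {ω | U ω ≤ u} ≤ ENNReal.ofReal u)
    (c : ℝ) (hc : 0 < c) :
    ∫⁻ ω, ENNReal.ofReal ((if U ω ≤ c * β (V ω) then (1 : ℝ) else 0) / V ω) ∂μ
      ≤ ENNReal.ofReal c := by
  have hmono : Monotone β := by
    rw [funext hβ]
    exact setIntegral_id_Ioc_mono ν
  have hβnn : ∀ r, 0 ≤ β r := fun r => by
    rw [hβ]
    exact setIntegral_nonneg measurableSet_Ioc fun u hu => hu.1.le
  have hcdf : ∀ u, 0 ≤ u → μ {ω | U ω ≤ u} ≤ ENNReal.ofReal u := by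
    intro u hu
    rcases le_total u 1 with h | h
    · exact hunif u ⟨hu, h⟩
    · exact prob_le_one.trans (ENNReal.one_le_ofReal.mpr h)
  have hset : MeasurableSet {p : Ω × ℝ | U p.1 ≤ c * β p.2} :=
    measurableSet_le (hU.comp measurable_fst)
      ((hmono.measurable.comp measurable_snd).const_mul c)
  have hmeas : Measurable fun p : Ω × ℝ =>
      {ω | U ω ≤ c * β p.2}.indicator (fun _ => ENNReal.ofReal (p.2 ^ (-2 : ℝ))) p.1 :=
    Measurable.ite hset (by fun_prop) measurable_const
  calc
    _ ≤ ∫⁻ ω, ∫⁻ v in Set.Ioi (0 : ℝ),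
          {ω | U ω ≤ c * β v}.indicator (fun _ => ENNReal.ofReal (v ^ (-2 : ℝ))) ω ∂volume ∂μ := by
      refine lintegral_mono fun ω => ?_
      by_cases hω : U ω ≤ c * β (V ω)
      swap
      · simp [hω]
      rcases (hVnn ω).eq_or_lt with h0 | h0
      · simp [← h0]
      simp only [hω, if_true, one_div]
      rw [← lintegral_Ioi_ofReal_rpow_neg_two h0]
      refine le_trans ?_ (lintegral_mono_set (Set.Ioi_subset_Ioi h0.le))
      refine setLIntegral_mono' measurableSet_Ioi fun v (hv : V ω < v) => ?_
      rw [Set.indicator_of_mem]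
      exact hω.trans (mul_le_mul_of_nonneg_left (hmono hv.le) hc.le)
    _ = ∫⁻ v in Set.Ioi (0 : ℝ), ∫⁻ ω,
          {ω | U ω ≤ c * β v}.indicator (fun _ => ENNReal.ofReal (v ^ (-2 : ℝ))) ω ∂μ :=
      lintegral_lintegral_swap hmeas.aemeasurable
    _ ≤ ∫⁻ v in Set.Ioi (0 : ℝ), ENNReal.ofReal c * (ENNReal.ofReal (v ^ (-2 : ℝ)) *
          ENNReal.ofReal (∫ u in Set.Ioc (0 : ℝ) v, u ∂ν)) := by
      refine lintegral_mono fun v => ?_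
      rw [lintegral_indicator_const (measurableSet_le hU measurable_const), ← hβ,
        mul_left_comm, ← ENNReal.ofReal_mul hc.le]
      gcongr
      exact hcdf _ (mul_nonneg hc.le (hβnn v))
    _ ≤ ENNReal.ofReal c := by
      rw [lintegral_const_mul' _ _ ENNReal.ofReal_ne_top]
      exact mul_le_of_le_one_right' (lintegral_rpow_neg_two_mul_setIntegral_id_le ν)
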